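/- For every integer m ≥ 1, one has the inclusion I^m ⊆ (I^m ∩ K[F₂](X₁ − 1)) + K[F₂](X₀ − 1). Consequently, for every m ≥ 0 the image of I^m under the quotient map K[F₂] → K[F₂]/K[F₂](X₀ − 1) coincides with the image of (K·1 ⊕ K[F₂](X₁ − 1)) ∩ I^m under this quotient map. -/

import Mathlib

noncomputable section

/-- The free group on two generators. -/
abbrev F2 : Type := FreeGroup (Fin 2)

/-- The first generator `X₀` of `F₂`. -/
def X0 : F2 := FreeGroup.of 0

/-- The second generator `X₁` of `F₂`. -/
def X1 : F2 := FreeGroup.of 1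

/-- The unit `e^{2πi/N}` of `ℂ`. -/
def zetaN (N : ℕ) : ℂˣ :=
  Units.mk0 (Complex.exp (2 * Real.pi * Complex.I / N)) (Complex.exp_ne_zero _)

/-- The group `μ_N` of `N`-th roots of unity in `ℂˣ`. -/
def muN (N : ℕ) : Subgroup ℂˣ := rootsOfUnity N ℂ

lemma zetaN_mem (N : ℕ) : zetaN N ∈ muN N := by
  rcases Nat.eq_zero_or_pos N with h | h
  · subst h; simp [muN, mem_rootsOfUnity]
  · rw [muN, mem_rootsOfUnity]
    have hcast : (N : ℂ) ≠ 0 := Nat.cast_ne_zero.mpr h.ne'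
    have : (zetaN N : ℂ) ^ N = 1 := by
      rw [zetaN, Units.val_mk0, ← Complex.exp_nat_mul, mul_div_cancel₀ _ hcast]
      exact Complex.exp_two_pi_mul_I
    exact Units.ext (by simpa using this)

/-- The morphism `π : F₂ → μ_N` determined by `π(X₀) = e^{2πi/N}` and `π(X₁) = 1`. -/
def piN (N : ℕ) : F2 →* (muN N) :=
  FreeGroup.lift (fun i => if i = 0 then ⟨zetaN N, zetaN_mem N⟩ else 1)

/-- The subgroup `H := ker π` of `F₂`. -/
def Hgrp (N : ℕ) : Subgroup F2 := (piN N).ker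

/-- The two-sided ideal `I = ker(K[F₂] → K[μ_N])`, as a `K`-submodule of `K[F₂]`. -/
def Isub (K : Type*) [CommRing K] (N : ℕ) : Submodule K (MonoidAlgebra K F2) :=
  (RingHom.ker (MonoidAlgebra.mapDomainRingHom K (piN N))).restrictScalars K

/-- Powers of the ideal `I`, with the convention `I⁰ = K[F₂]`. -/
def Ipow (K : Type*) [CommRing K] (N : ℕ) : ℕ → Submodule K (MonoidAlgebra K F2)
  | 0 => ⊤
  | (m + 1) => Isub K N * Ipow K N m

/-- The `K`-submodule `K[F₂](g − 1) = {v (g − 1) : v ∈ K[F₂]}` of `K[F₂]`. -/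
def Rsub (K : Type*) [CommRing K] (g : F2) : Submodule K (MonoidAlgebra K F2) :=
  LinearMap.range (LinearMap.mulRight K (MonoidAlgebra.of K F2 g - 1))

/-- The `K`-submodule `W = K·1 ⊕ K[F₂](X₁ − 1)` of `K[F₂]`. -/
def Wsub (K : Type*) [CommRing K] : Submodule K (MonoidAlgebra K F2) :=
  Submodule.span K {1} ⊔ Rsub K X1

/-!
Every element of `I` has augmentation zero, and the augmentation ideal of `K[F₂]` is
`K[F₂](X₁ - 1) + K[F₂](X₀ - 1)`. Multiplying `I ⊆ K[F₂](X₁ - 1) + K[F₂](X₀ - 1)` on the left by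
`I^(m - 1)` gives the inclusion, since `X₁ - 1 ∈ I` makes the first summand land in `I^m`.
For `m = 0` one uses instead that `K[F₂]` is the sum of `K · 1` and the augmentation ideal.
-/

section LeftIdeals

theorem ideal_pow_le_pow_inf_sup {A : Type*} [Semiring A] {I J L : Ideal A} (hJI : J ≤ I)
    (hI : I ≤ J ⊔ L) {m : ℕ} (hm : m ≠ 0) : I ^ m ≤ I ^ m ⊓ J ⊔ L := by
  obtain ⟨n, rfl⟩ := Nat.exists_eq_succ_of_ne_zero hm
  calc I ^ (n + 1) = I ^ n * I := Submodule.pow_succ I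
    _ ≤ I ^ n * J ⊔ I ^ n * L := (Ideal.mul_mono_right hI).trans_eq (Ideal.mul_sup _ _ _)
    _ ≤ I ^ (n + 1) ⊓ J ⊔ L :=
      sup_le_sup (le_inf ((Ideal.mul_mono_right hJI).trans_eq (Submodule.pow_succ I).symm)
        Ideal.mul_le_right) Ideal.mul_le_right

theorem restrictScalars_pow_le_pow_inf_sup (K : Type*) {A : Type*} [CommSemiring K] [Semiring A]
    [Algebra K A] {I J L : Ideal A} (hJI : J ≤ I) (hI : I ≤ J ⊔ L) {m : ℕ} (hm : m ≠ 0) :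
    (I ^ m).restrictScalars K ≤
      (I ^ m).restrictScalars K ⊓ J.restrictScalars K ⊔ L.restrictScalars K := by
  rw [← Submodule.restrictScalars_inf, ← Submodule.restrictScalars_sup]
  exact Submodule.restrictScalars_mono K (ideal_pow_le_pow_inf_sup hJI hI hm)

theorem map_mkQ_eq_map_mkQ_inf {R M : Type*} [Ring R] [AddCommGroup M] [Module R M]
    {P W L : Submodule R M} (h : P ≤ W ⊓ P ⊔ L) : P.map L.mkQ = (W ⊓ P).map L.mkQ :=
  le_antisymm ((LinearMap.map_le_map_iff _).2 (by rwa [Submodule.ker_mkQ]))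
    (Submodule.map_mono inf_le_right)

variable {K A : Type*} [CommRing K] [Ring A] [Algebra K A]

theorem map_mkQ_pow_eq_map_mkQ_inf_pow {I J L : Ideal A} (hJI : J ≤ I) (hI : I ≤ J ⊔ L)
    (htop : Submodule.span K {1} ⊔ (J ⊔ L).restrictScalars K = ⊤) (m : ℕ) :
    ((I ^ m).restrictScalars K).map (L.restrictScalars K).mkQ =
      ((Submodule.span K {1} ⊔ J.restrictScalars K) ⊓ (I ^ m).restrictScalars K).map
        (L.restrictScalars K).mkQ := by
  apply map_mkQ_eq_map_mkQ_inf
  rcases eq_or_ne m 0 with rfl | hm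
  · rw [Submodule.pow_zero, Ideal.one_eq_top, Submodule.restrictScalars_top, inf_top_eq, sup_assoc,
      ← Submodule.restrictScalars_sup, htop]
  · refine (restrictScalars_pow_le_pow_inf_sup K hJI hI hm).trans (sup_le_sup_right ?_ _)
    exact le_inf (inf_le_right.trans le_sup_right) inf_le_left

theorem span_one_sup_ker_eq_top (ε : A →ₐ[K] K) :
    Submodule.span K {1} ⊔ (RingHom.ker ε).restrictScalars K = ⊤ := by
  refine eq_top_iff.2 fun x _ ↦ ?_
  rw [← add_sub_cancel (algebraMap K A (ε x)) x]
  refine Submodule.add_mem_sup ?_ ?_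
  · exact Submodule.mem_span_singleton.2 ⟨ε x, (Algebra.algebraMap_eq_smul_one _).symm⟩
  · simp [RingHom.mem_ker]

end LeftIdeals

section Augmentation

theorem of_sub_one_mem_of_mem_closure {R G : Type*} [Ring R] [Group G] {S : Set G}
    {J : Ideal (MonoidAlgebra R G)} (hS : ∀ s ∈ S, MonoidAlgebra.of R G s - 1 ∈ J)
    {g : G} (hg : g ∈ Subgroup.closure S) :
    MonoidAlgebra.of R G g - 1 ∈ J := by
  induction hg using Subgroup.closure_induction with
  | mem s hs => exact hS s hs
  | one => rw [map_one, sub_self]; exact zero_mem J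
  | mul a b _ _ ha hb =>
    have cocycle : MonoidAlgebra.of R G (a * b) - 1 =
        MonoidAlgebra.of R G a * (MonoidAlgebra.of R G b - 1) + (MonoidAlgebra.of R G a - 1) := by
      rw [map_mul, mul_sub, mul_one, sub_add_sub_cancel]
    rw [cocycle]
    exact add_mem (J.mul_mem_left _ hb) ha
  | inv a _ ha =>
    have cocycle_inv : MonoidAlgebra.of R G a⁻¹ - 1 =
        -(MonoidAlgebra.of R G a⁻¹ * (MonoidAlgebra.of R G a - 1)) := by
      rw [mul_sub, ← map_mul, inv_mul_cancel, map_one, mul_one, neg_sub]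
    rw [cocycle_inv]
    exact neg_mem (J.mul_mem_left _ ha)

variable {K G M : Type*}

variable (K G) in
/-- The augmentation `K[G] → K`, sending every element of `G` to `1`. -/
def augmentation [CommSemiring K] [Monoid G] : MonoidAlgebra K G →ₐ[K] K :=
  MonoidAlgebra.lift K K G 1

theorem ker_mapDomainRingHom_le_ker_augmentation [CommSemiring K] [Monoid G] [Monoid M]
    (φ : G →* M) :
    RingHom.ker (MonoidAlgebra.mapDomainRingHom K φ) ≤ RingHom.ker (augmentation K G) := by
  have factorization : (augmentation K G : MonoidAlgebra K G →+* K) =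
      (augmentation K M : MonoidAlgebra K M →+* K).comp (MonoidAlgebra.mapDomainRingHom K φ) := by
    ext <;> simp [augmentation]
  intro x hx
  change (augmentation K G : MonoidAlgebra K G →+* K) x = 0
  rw [factorization, RingHom.comp_apply, RingHom.mem_ker.1 hx, map_zero]

theorem sub_algebraMap_augmentation_mem [CommRing K] [Monoid G] {J : Ideal (MonoidAlgebra K G)}
    (hJ : ∀ g, MonoidAlgebra.of K G g - 1 ∈ J) (x : MonoidAlgebra K G) :
    x - algebraMap K _ (augmentation K G x) ∈ J := by
  induction x using MonoidAlgebra.induction_linear with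
  | zero => simp
  | add x y hx hy =>
    rw [map_add, map_add, add_sub_add_comm]
    exact add_mem hx hy
  | single g r =>
    simpa [augmentation, smul_sub, Algebra.algebraMap_eq_smul_one] using
      (J.restrictScalars K).smul_mem r (hJ g)

variable [CommRing K] [Group G]

theorem ker_augmentation_eq_span {S : Set G} (hS : Subgroup.closure S = ⊤) :
    RingHom.ker (augmentation K G) = Ideal.span ((MonoidAlgebra.of K G · - 1) '' S) := by
  apply le_antisymm
  · intro x hx
    have of_sub_one_mem (g : G) : MonoidAlgebra.of K G g - 1 ∈
        Ideal.span ((MonoidAlgebra.of K G · - 1) '' S) :=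
      of_sub_one_mem_of_mem_closure
        (fun s hs ↦ Ideal.subset_span (Set.mem_image_of_mem (MonoidAlgebra.of K G · - 1) hs))
        (hS ▸ Subgroup.mem_top g)
    have hmem := sub_algebraMap_augmentation_mem of_sub_one_mem x
    rwa [RingHom.mem_ker.1 hx, map_zero, sub_zero] at hmem
  · rw [Ideal.span_le]
    rintro _ ⟨s, -, rfl⟩
    simp [RingHom.mem_ker, augmentation]

theorem ker_augmentation_eq_span_sup_span {x₀ x₁ : G}
    (hgen : Subgroup.closure {x₀, x₁} = ⊤) :
    RingHom.ker (augmentation K G) =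
      Ideal.span {MonoidAlgebra.of K G x₁ - 1} ⊔ Ideal.span {MonoidAlgebra.of K G x₀ - 1} := by
  rw [ker_augmentation_eq_span hgen, Set.image_pair, Ideal.span_insert, sup_comm]

end Augmentation

theorem closure_X0_X1_eq_top : Subgroup.closure {X0, X1} = ⊤ := by
  rw [← FreeGroup.closure_range_of (Fin 2)]
  congr 1
  ext g
  simp [X0, X1, Fin.exists_fin_two, eq_comm]

theorem piN_X1 (N : ℕ) : piN N X1 = 1 := by
  simp [piN, X1]

theorem Rsub_eq_restrictScalars_span (K : Type*) [CommRing K] (g : F2) :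
    Rsub K g = (Ideal.span {MonoidAlgebra.of K F2 g - 1}).restrictScalars K := by
  ext x
  simp [Rsub, Ideal.mem_span_singleton']

theorem Ipow_eq_restrictScalars_pow (K : Type*) [CommRing K] (N m : ℕ) :
    Ipow K N m =
      (RingHom.ker (MonoidAlgebra.mapDomainRingHom K (piN N)) ^ m).restrictScalars K := by
  induction m with
  | zero => rw [Ipow, Submodule.pow_zero, Ideal.one_eq_top, Submodule.restrictScalars_top]
  | succ m ih => rw [Ipow, ih, Isub, Ideal.IsTwoSided.pow_succ, Submodule.restrictScalars_mul]

theorem statement5_general (K : Type*) [CommRing K] {G M : Type*} [Group G] [Monoid M]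
    {x₀ x₁ : G} (hgen : Subgroup.closure {x₀, x₁} = ⊤) (φ : G →* M) (hφ : φ x₁ = 1) :
    let I (m : ℕ) := (RingHom.ker (MonoidAlgebra.mapDomainRingHom K φ) ^ m).restrictScalars K
    let J (x : G) := (Ideal.span {MonoidAlgebra.of K G x - 1}).restrictScalars K
    (∀ m : ℕ, 1 ≤ m → I m ≤ (I m ⊓ J x₁) ⊔ J x₀) ∧
    ∀ m : ℕ, (I m).map (J x₀).mkQ = ((Submodule.span K {1} ⊔ J x₁) ⊓ I m).map (J x₀).mkQ := by
  have hx₁ : Ideal.span {MonoidAlgebra.of K G x₁ - 1} ≤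
      RingHom.ker (MonoidAlgebra.mapDomainRingHom K φ) := by
    rw [Ideal.span_singleton_le_iff_mem, RingHom.mem_ker, map_sub, map_one, sub_eq_zero]
    simp [hφ, MonoidAlgebra.one_def]
  have hker := ker_augmentation_eq_span_sup_span (K := K) hgen
  have hle := (ker_mapDomainRingHom_le_ker_augmentation φ).trans_eq hker
  have htop := span_one_sup_ker_eq_top (augmentation K G)
  rw [hker] at htop
  exact ⟨fun _ hm ↦ restrictScalars_pow_le_pow_inf_sup K hx₁ hle (Nat.one_le_iff_ne_zero.1 hm),
    map_mkQ_pow_eq_map_mkQ_inf_pow hx₁ hle htop⟩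

/-- For every `m ≥ 1`, `I^m ⊆ (I^m ∩ K[F₂](X₁ − 1)) + K[F₂](X₀ − 1)`; consequently, for
every `m ≥ 0` the images of `I^m` and of `(K·1 ⊕ K[F₂](X₁ − 1)) ∩ I^m` under the quotient
map `K[F₂] → K[F₂]/K[F₂](X₀ − 1)` coincide. -/
theorem statement5 (K : Type*) [CommRing K] [Algebra ℚ K] (N : ℕ) (hN : 0 < N) :
    (∀ m : ℕ, 1 ≤ m → Ipow K N m ≤ (Ipow K N m ⊓ Rsub K X1) ⊔ Rsub K X0) ∧
    ∀ m : ℕ,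
      Submodule.map (Rsub K X0).mkQ (Ipow K N m) =
        Submodule.map (Rsub K X0).mkQ (Wsub K ⊓ Ipow K N m) := by
  rw [Wsub, Rsub_eq_restrictScalars_span K X0, Rsub_eq_restrictScalars_span K X1]
  simpa only [Ipow_eq_restrictScalars_pow] using
    statement5_general K closure_X0_X1_eq_top (piN N) (piN_X1 N)
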